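/- arXiv:1601.03678 — 2 statements merged into one kernel-verified Lean document; each statement's English description precedes it below -/
import Mathlib

section
/- There exists an absolute constant c > 0 such that the following holds. Let S be a subset of {1, ..., n} and let v be a random vector uniformly distributed on the unit sphere S^{n-1} of R^n. Then for any t > 0, with probability at least 1 - exp(-c n) - 4 exp(-t), one has | ||v||_S^2 - |S|/n | <= (8/n)(sqrt(n t) + t). -/
open MeasureTheory

/-- A measure `μ` on `ℝⁿ` is the uniform (rotation-invariant) probability distribution on the
unit sphere `S^{n-1}`. -/
def IsUniformOnSphere {n : ℕ} (μ : Measure (EuclideanSpace ℝ (Fin n))) : Prop :=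
  IsProbabilityMeasure μ ∧
  μ (Metric.sphere (0 : EuclideanSpace ℝ (Fin n)) 1) = 1 ∧
  ∀ O : EuclideanSpace ℝ (Fin n) ≃ₗᵢ[ℝ] EuclideanSpace ℝ (Fin n),
    Measure.map O μ = μ


open ProbabilityTheory in
lemma aux_charFun_rot {n : ℕ} (μ : Measure (EuclideanSpace ℝ (Fin n)))
    (hμ : ∀ O : EuclideanSpace ℝ (Fin n) ≃ₗᵢ[ℝ] EuclideanSpace ℝ (Fin n), Measure.map O μ = μ)
    (a b : EuclideanSpace ℝ (Fin n)) (hab : ‖a‖ = ‖b‖) : charFun μ a = charFun μ b := by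
  set O := (Submodule.span ℝ {b - a})ᗮ.reflection with hO
  have hOb : O b = a := Submodule.reflection_sub hab.symm
  conv_lhs => rw [← hμ O, ← hOb]
  rw [charFun_apply, charFun_apply, integral_map (by fun_prop)
    (Measurable.aestronglyMeasurable (by fun_prop))]
  simp only [LinearIsometryEquiv.inner_map_map]

open ProbabilityTheory in
lemma aux_map_eq {n : ℕ} (μ : Measure (EuclideanSpace ℝ (Fin n))) (h : IsUniformOnSphere μ) :
    Measure.map (fun p : EuclideanSpace ℝ (Fin n) × EuclideanSpace ℝ (Fin n) => ‖p.1‖ • p.2)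
      ((stdGaussian (EuclideanSpace ℝ (Fin n))).prod μ) = stdGaussian (EuclideanSpace ℝ (Fin n)) := by
  obtain ⟨hp, hs, hμ⟩ := h
  set γ := stdGaussian (EuclideanSpace ℝ (Fin n)) with hγ
  have hm : Measurable (fun p : EuclideanSpace ℝ (Fin n) × EuclideanSpace ℝ (Fin n) =>
      ‖p.1‖ • p.2) := by fun_prop
  have : IsProbabilityMeasure (Measure.map (fun p : EuclideanSpace ℝ (Fin n) ×
      EuclideanSpace ℝ (Fin n) => ‖p.1‖ • p.2) (γ.prod μ)) :=
    Measure.isProbabilityMeasure_map hm.aemeasurable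
  have hae : ∀ᵐ x ∂μ, ‖x‖ = 1 := by
    have h1 := (prob_compl_eq_zero_iff (μ := μ)
      (Metric.isClosed_sphere (x := (0 : EuclideanSpace ℝ (Fin n))) (ε := 1)).measurableSet).2 hs
    rw [ae_iff]
    convert h1 using 2
    ext x; simp
  have hint : ∀ f : EuclideanSpace ℝ (Fin n) × EuclideanSpace ℝ (Fin n) → ℝ, Measurable f →
      Integrable (fun p => Complex.exp (f p * Complex.I)) (γ.prod μ) := by
    intro f hf
    refine Integrable.of_bound (C := 1) (Measurable.aestronglyMeasurable (by fun_prop)) ?_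
    exact Filter.Eventually.of_forall fun p => by rw [Complex.norm_exp_ofReal_mul_I]
  apply Measure.ext_of_charFun
  ext ξ
  rw [charFun_stdGaussian, charFun_apply, integral_map hm.aemeasurable
    (Measurable.aestronglyMeasurable (by fun_prop)), integral_prod _ (hint _ (by fun_prop))]
  have e1 : ∀ g : EuclideanSpace ℝ (Fin n),
      ∫ x, Complex.exp ((inner ℝ (‖g‖ • x) ξ : ℝ) * Complex.I) ∂μ =
      ∫ x, Complex.exp ((inner ℝ x (‖ξ‖ • g) : ℝ) * Complex.I) ∂μ := by
    intro g
    have := aux_charFun_rot μ hμ (‖g‖ • ξ) (‖ξ‖ • g) (by simp [norm_smul, mul_comm])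
    rw [charFun_apply, charFun_apply] at this
    rw [← this]
    simp only [real_inner_smul_left, real_inner_smul_right]
  simp only [e1]
  rw [integral_integral_swap (f := fun g x => Complex.exp ((inner ℝ x (‖ξ‖ • g) : ℝ) * Complex.I))
    (hint (fun p => inner ℝ p.2 (‖ξ‖ • p.1)) (by fun_prop))]
  have e2 : ∀ x : EuclideanSpace ℝ (Fin n),
      ∫ g, Complex.exp ((inner ℝ x (‖ξ‖ • g) : ℝ) * Complex.I) ∂γ =
      Complex.exp (- ‖‖ξ‖ • x‖ ^ 2 / 2) := by
    intro x
    rw [← charFun_stdGaussian, charFun_apply]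
    simp only [real_inner_smul_right, real_inner_comm]
    rfl
  simp only [e2]
  rw [integral_congr_ae (g := fun _ => Complex.exp (- ‖ξ‖ ^ 2 / 2))]
  · simp
  · filter_upwards [hae] with x hx
    simp [norm_smul, hx]

lemma aux_exp (u : ℝ) (h1 : -(1/2) ≤ u) (h2 : u ≤ 1/2) : (1 - u)⁻¹ ≤ Real.exp (u + u ^ 2) := by
  have h0 : 0 < 1 - u := by linarith
  rw [inv_le_iff_one_le_mul₀' h0]
  rcases le_total 0 u with h | h
  · have := Real.quadratic_le_exp_of_nonneg (x := u + u ^ 2) (by positivity)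
    have h3 : (1 - u) * (1 + (u + u ^ 2) + (u + u ^ 2) ^ 2 / 2) ≤ (1 - u) * Real.exp (u + u ^ 2) := by
      gcongr
    have h4 : (1 - u) * (1 + (u + u ^ 2) + (u + u ^ 2) ^ 2 / 2) - 1
      = u ^ 2 * ((1 - u - u^2 - u^3) / 2) := by ring
    have h5 : u ^ 2 ≤ 1/4 := by nlinarith
    have h6 : u ^ 3 ≤ 1/8 := by nlinarith
    have h7 : 0 ≤ u ^ 2 * ((1 - u - u^2 - u^3) / 2) := by
      apply mul_nonneg (sq_nonneg u); linarith
    linarith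
  · have := Real.add_one_le_exp (u + u ^ 2)
    have h3 : (1 - u) * (u + u ^ 2 + 1) ≤ (1 - u) * Real.exp (u + u ^ 2) := by
      gcongr
    nlinarith [mul_nonneg (neg_nonneg.2 h) (sq_nonneg u)]

open ProbabilityTheory in
lemma aux_gauss (s : ℝ) (h1 : -(1/4) ≤ s) (h2 : s ≤ 1/4) :
    Integrable (fun x : ℝ => Real.exp (s * x ^ 2)) (gaussianReal 0 1) ∧
    ∫ x, Real.exp (s * x ^ 2) ∂(gaussianReal 0 1) ≤ Real.exp (s + 2 * s ^ 2) := by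
  have e : ∀ x : ℝ, gaussianPDFReal 0 1 x • Real.exp (s * x ^ 2) =
      (Real.sqrt (2 * Real.pi))⁻¹ * Real.exp (-(1/2 - s) * x ^ 2) := by
    intro x
    simp only [gaussianPDFReal_def, smul_eq_mul, NNReal.coe_one, mul_one, sub_zero]
    rw [mul_assoc, ← Real.exp_add]
    congr 2
    ring
  constructor
  · rw [gaussianReal_of_var_ne_zero 0 one_ne_zero]
    rw [integrable_withDensity_iff_integrable_smul' (measurable_gaussianPDF 0 1)
      (Filter.Eventually.of_forall fun x => gaussianPDF_lt_top)]
    simp only [toReal_gaussianPDF, e]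
    exact (integrable_exp_neg_mul_sq (by linarith)).const_mul _
  · rw [integral_gaussianReal_eq_integral_smul one_ne_zero]
    simp only [e]
    rw [integral_const_mul, integral_gaussian]
    have h3 := aux_exp (2 * s) (by linarith) (by linarith)
    have h0 : 0 < 1 - 2 * s := by linarith
    have hpi := Real.pi_pos
    rw [← Real.sqrt_inv, ← Real.sqrt_mul (by positivity)]
    have h4 : (2 * Real.pi)⁻¹ * (Real.pi / (1 / 2 - s)) = (1 - 2 * s)⁻¹ := by
      have : (1 / 2 - s) = (1 - 2 * s) / 2 := by ring
      rw [this]; field_simp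
    rw [h4]
    apply Real.sqrt_le_iff.2 ⟨by positivity, h3.trans (le_of_eq _)⟩
    rw [← Real.exp_nat_mul]
    congr 1; push_cast; ring

open ProbabilityTheory in
lemma aux_chernoff {n : ℕ} (d : Fin n → ℝ) (h : ∀ i, |d i| ≤ 1/4) :
    (stdGaussian (EuclideanSpace ℝ (Fin n))) {x | 0 ≤ ∑ i, d i * x i ^ 2} ≤
      ENNReal.ofReal (Real.exp (∑ i, (d i + 2 * d i ^ 2))) := by
  rw [← map_pi_eq_stdGaussian, Measure.map_apply (by fun_prop)
    (measurableSet_le (by fun_prop) (by fun_prop))]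
  set P := Measure.pi (fun _ : Fin n => gaussianReal 0 1) with hP
  have hi : Integrable (fun x : Fin n → ℝ => ∏ i, Real.exp (d i * x i ^ 2)) P :=
    Integrable.fintype_prod (f := fun i y => Real.exp (d i * y ^ 2))
      fun i => (aux_gauss (d i) (abs_le.1 (h i)).1 (abs_le.1 (h i)).2).1
  have hI : ∫ x, ∏ i, Real.exp (d i * x i ^ 2) ∂P ≤ Real.exp (∑ i, (d i + 2 * d i ^ 2)) := by
    rw [hP, integral_fintype_prod_eq_prod (f := fun i y => Real.exp (d i * y ^ 2)), Real.exp_sum]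
    apply Finset.prod_le_prod
    · intro i _; positivity
    · intro i _
      exact (aux_gauss (d i) (abs_le.1 (h i)).1 (abs_le.1 (h i)).2).2
  have hM := mul_meas_ge_le_integral_of_nonneg (μ := P)
    (f := fun x : Fin n → ℝ => ∏ i, Real.exp (d i * x i ^ 2))
    (Filter.Eventually.of_forall fun x => Finset.prod_nonneg fun i _ => (Real.exp_pos _).le) hi 1
  rw [one_mul] at hM
  rw [ENNReal.le_ofReal_iff_toReal_le (measure_ne_top _ _) (Real.exp_pos _).le]
  refine le_trans (le_of_eq ?_) (hM.trans hI)
  rw [measureReal_def]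
  congr 2
  ext x
  simp [← Real.exp_sum]

open ProbabilityTheory in
lemma aux_transfer {n : ℕ} (μ : Measure (EuclideanSpace ℝ (Fin n))) (hμ : IsUniformOnSphere μ)
    (d : Fin n → ℝ) (h : ∀ i, |d i| ≤ 1/4) :
    μ {x | 0 ≤ ∑ i, d i * x i ^ 2} ≤ ENNReal.ofReal (Real.exp (∑ i, (d i + 2 * d i ^ 2))) := by
  refine le_trans ?_ (aux_chernoff d h)
  conv_rhs => rw [← aux_map_eq μ hμ]
  have := hμ.1
  rw [Measure.map_apply (by fun_prop) (measurableSet_le (by fun_prop) (by fun_prop))]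
  have : μ {x | 0 ≤ ∑ i, d i * x i ^ 2} = ((stdGaussian (EuclideanSpace ℝ (Fin n))).prod μ)
      (Set.univ ×ˢ {x | 0 ≤ ∑ i, d i * x i ^ 2}) := by
    rw [Measure.prod_prod]; simp
  rw [this]
  apply measure_mono
  rintro ⟨g, x⟩ hx
  simp only [Set.mem_prod, Set.mem_univ, true_and, Set.mem_setOf_eq] at hx
  simp only [Set.mem_preimage, Set.mem_setOf_eq, PiLp.smul_apply, smul_eq_mul]
  have : ∑ i, d i * (‖g‖ * x i) ^ 2 = ‖g‖ ^ 2 * ∑ i, d i * x i ^ 2 := by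
    rw [Finset.mul_sum]; exact Finset.sum_congr rfl fun i _ => by ring
  rw [this]; positivity

lemma aux_tail {n : ℕ} (hn : 0 < n) (μ : Measure (EuclideanSpace ℝ (Fin n)))
    (hμ : IsUniformOnSphere μ) (S : Finset (Fin n)) (σ : ℝ) (hσ : |σ| = 1) (ε : ℝ)
    (h0 : 0 < ε) (h1 : ε ≤ 1) :
    μ ({x | ε < σ * ((∑ i ∈ S, x i ^ 2) - (S.card : ℝ) / n)} ∩ Metric.sphere 0 1) ≤
      ENNReal.ofReal (Real.exp (-(n * ε ^ 2 / 32))) := by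
  have hn' : (0 : ℝ) < n := by exact_mod_cast hn
  have hk : (S.card : ℝ) ≤ n := by exact_mod_cast (Finset.card_le_univ S).trans (by simp)
  set q : ℝ := S.card / n with hq
  have hq0 : 0 ≤ q := by positivity
  have hq1 : q ≤ 1 := by rw [hq, div_le_one hn']; exact hk
  set e : Fin n → ℝ := fun i => σ * ((if i ∈ S then 1 else 0) - q) - ε with he
  have hb : ∀ i, |e i| ≤ 2 := by
    intro i
    have : |(if i ∈ S then (1:ℝ) else 0) - q| ≤ 1 := by
      rw [abs_le]; split_ifs <;> constructor <;> linarith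
    calc |e i| ≤ |σ * ((if i ∈ S then 1 else 0) - q)| + |ε| := abs_sub _ _
      _ ≤ 1 + 1 := by
        rw [abs_mul, hσ, one_mul, abs_of_pos h0]; gcongr
      _ = 2 := by norm_num
  have hsum : ∑ i, e i = -(n * ε) := by
    simp only [he, Finset.sum_sub_distrib, ← Finset.mul_sum]
    simp [hq]
    field_simp; simp
  have key := aux_transfer μ hμ (fun i => ε / 16 * e i) (by
    intro i
    rw [abs_mul, abs_of_pos (by positivity)]
    have := hb i
    nlinarith [abs_nonneg (e i)])
  refine (measure_mono ?_).trans (key.trans (ENNReal.ofReal_le_ofReal (Real.exp_le_exp.2 ?_)))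
  · rintro x ⟨hx, hx1⟩
    simp only [Set.mem_setOf_eq] at hx ⊢
    have hnorm : ∑ i, x i ^ 2 = 1 := by
      rw [← EuclideanSpace.real_norm_sq_eq]; simp at hx1; simp [hx1]
    have : ∑ i, ε / 16 * e i * x i ^ 2 = ε / 16 * (σ * ((∑ i ∈ S, x i ^ 2) - q) - ε) := by
      have h2 : ∀ i, ε / 16 * e i * x i ^ 2 = ε / 16 * (σ * (if i ∈ S then x i ^ 2 else 0))
          - ε / 16 * (σ * q + ε) * x i ^ 2 := by
        intro i; simp only [he]; split_ifs <;> ring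
      simp only [h2, Finset.sum_sub_distrib, ← Finset.mul_sum, hnorm]
      simp
      ring
    rw [this]
    apply mul_nonneg (by positivity); linarith
  · have h2 : ∀ i, ε / 16 * e i + 2 * (ε / 16 * e i) ^ 2 ≤ ε / 16 * e i + ε ^ 2 / 32 := by
      intro i
      have : e i ^ 2 ≤ 4 := by have := abs_le.1 (hb i); nlinarith
      nlinarith [sq_nonneg ε]
    refine (Finset.sum_le_sum fun i _ => h2 i).trans (le_of_eq ?_)
    rw [Finset.sum_add_distrib, ← Finset.mul_sum, hsum]
    simp
    ring

theorem stmt5 :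
    ∃ c : ℝ, 0 < c ∧
      ∀ (n : ℕ) (μ : Measure (EuclideanSpace ℝ (Fin n))),
        IsUniformOnSphere μ →
        ∀ S : Finset (Fin n), ∀ t : ℝ, 0 < t →
          ENNReal.ofReal (1 - Real.exp (-(c * n)) - 4 * Real.exp (-t)) ≤
            μ {x | |(∑ i ∈ S, x i ^ 2) - (S.card : ℝ) / n| ≤
                (8 / n) * (Real.sqrt (n * t) + t)} := by
  refine ⟨1, one_pos, ?_⟩
  intro n μ hμ S t ht
  rcases Nat.eq_zero_or_pos n with rfl | hn
  · rw [ENNReal.ofReal_of_nonpos]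
    · exact zero_le
    · simp; positivity
  have hn' : (0 : ℝ) < n := by exact_mod_cast hn
  have hp := hμ.1
  have hk : (S.card : ℝ) ≤ n := by exact_mod_cast (Finset.card_le_univ S).trans (by simp)
  have hq0 : 0 ≤ (S.card : ℝ) / n := by positivity
  have hq1 : (S.card : ℝ) / n ≤ 1 := by rw [div_le_one hn']; exact hk
  set ε : ℝ := (8 / n) * (Real.sqrt (n * t) + t) with hε
  have h0 : 0 < ε := by positivity
  have hsph : μ (Metric.sphere 0 1)ᶜ = 0 :=
    (prob_compl_eq_zero_iff Metric.isClosed_sphere.measurableSet).2 hμ.2.1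
  set A : Set (EuclideanSpace ℝ (Fin n)) :=
    {x | |(∑ i ∈ S, x i ^ 2) - (S.card : ℝ) / n| ≤ ε} with hA
  have hAm : MeasurableSet A := measurableSet_le (by fun_prop) (by fun_prop)
  have hbad : μ Aᶜ ≤ ENNReal.ofReal (4 * Real.exp (-t)) := by
    rcases le_or_gt ε 1 with h1 | h1
    · have hsub : Aᶜ ⊆ (({x | ε < 1 * ((∑ i ∈ S, x i ^ 2) - (S.card : ℝ) / n)} ∩
          Metric.sphere 0 1) ∪ ({x | ε < (-1) * ((∑ i ∈ S, x i ^ 2) - (S.card : ℝ) / n)} ∩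
          Metric.sphere 0 1)) ∪ (Metric.sphere 0 1)ᶜ := by
        intro x hx
        by_cases hxs : x ∈ Metric.sphere (0 : EuclideanSpace ℝ (Fin n)) 1
        · left
          simp only [hA, Set.mem_compl_iff, Set.mem_setOf_eq, not_le, lt_abs] at hx
          rcases hx with hx | hx
          · exact Or.inl ⟨by simpa using hx, hxs⟩
          · exact Or.inr ⟨by simpa using hx, hxs⟩
        · exact Or.inr hxs
      have hexp : Real.exp (-(n * ε ^ 2 / 32)) ≤ Real.exp (-t) := by
        apply Real.exp_le_exp.2
        have h2 : 8 / n * Real.sqrt (n * t) ≤ ε := by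
          rw [hε]; gcongr; linarith
        have h3 : (8 / n * Real.sqrt (n * t)) ^ 2 ≤ ε ^ 2 := by gcongr
        rw [mul_pow, Real.sq_sqrt (by positivity)] at h3
        have h4 : n * ((8 / (n:ℝ)) ^ 2 * (n * t)) = 64 * t := by field_simp; norm_num
        have h5 := mul_le_mul_of_nonneg_left h3 hn'.le
        linarith
      have hu := aux_tail hn μ hμ S 1 (by simp) ε h0 h1
      have hl := aux_tail hn μ hμ S (-1) (by simp) ε h0 h1
      calc μ Aᶜ ≤ _ := measure_mono hsub
        _ ≤ _ := measure_union_le _ _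
        _ ≤ _ := add_le_add_left (measure_union_le _ _) _
        _ ≤ ENNReal.ofReal (Real.exp (-(n * ε ^ 2 / 32))) +
            ENNReal.ofReal (Real.exp (-(n * ε ^ 2 / 32))) + 0 := by
          rw [hsph]; gcongr
        _ ≤ ENNReal.ofReal (4 * Real.exp (-t)) := by
          rw [add_zero, ← ENNReal.ofReal_add (by positivity) (by positivity)]
          apply ENNReal.ofReal_le_ofReal
          linarith [Real.exp_pos (-t)]
    · have hsub : Aᶜ ⊆ (Metric.sphere 0 1)ᶜ := by
        rw [Set.compl_subset_compl]
        intro x hx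
        have hnorm : ∑ i, x i ^ 2 = 1 := by
          rw [← EuclideanSpace.real_norm_sq_eq]; simp at hx; simp [hx]
        have hle : ∑ i ∈ S, x i ^ 2 ≤ 1 := by
          rw [← hnorm]
          exact Finset.sum_le_univ_sum_of_nonneg fun i => sq_nonneg _
        have hge : 0 ≤ ∑ i ∈ S, x i ^ 2 := Finset.sum_nonneg fun i _ => sq_nonneg _
        simp only [hA, Set.mem_setOf_eq, abs_le]
        constructor <;> linarith
      exact (measure_mono hsub).trans (by rw [hsph]; exact zero_le)
  have h1 : μ A = 1 - μ Aᶜ := by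
    rw [← prob_compl_eq_one_sub hAm.compl, compl_compl]
  rw [h1]
  calc ENNReal.ofReal (1 - Real.exp (-(1 * n)) - 4 * Real.exp (-t))
      ≤ ENNReal.ofReal (1 - 4 * Real.exp (-t)) := by
        apply ENNReal.ofReal_le_ofReal; linarith [Real.exp_pos (-(1 * (n : ℝ)))]
    _ = 1 - ENNReal.ofReal (4 * Real.exp (-t)) := by
        rw [ENNReal.ofReal_sub _ (by positivity), ENNReal.ofReal_one]
    _ ≤ 1 - μ Aᶜ := by gcongr
end

section
/- For each n >= 1, let v_n be a random vector uniformly distributed on the unit sphere S^{n-1} of R^n. Let F(x) := P(Z^2 <= x) be the cumulative distribution function of the square of a standard normal random variable Z (the chi-squared distribution with one degree of freedom), let Q(s) := inf{ x in R : F(x) >= s } for 0 < s <= 1 with Q(0) := lim_{s -> 0+} Q(s), and let H(s) := -Q(1-s) for 0 <= s < 1. Then for any fixed 0 < delta < 1: (i) max over subsets S of {1,...,n} with |S| = floor(delta n) of ||v_n||_S^2 converges in probability to -integral_0^delta H(u) du as n -> infinity; and (ii) min over subsets S of {1,...,n} with |S| = floor(delta n) of ||v_n||_S^2 converges in probability to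 -integral_{1-delta}^1 H(u) du as n -> infinity. -/
open MeasureTheory ProbabilityTheory Filter

/-- `F(x) = P(Z² ≤ x)`, the cumulative distribution function of the square of a standard
normal random variable (the χ²-distribution with one degree of freedom). -/
noncomputable def chiSqCDF (x : ℝ) : ℝ :=
  ((gaussianReal 0 1) {y : ℝ | y ^ 2 ≤ x}).toReal

/-- The quantile function `Q(s) = inf {x : F(x) ≥ s}` of the χ²₁ distribution. -/
noncomputable def chiSqQuantile (s : ℝ) : ℝ :=
  sInf {x : ℝ | s ≤ chiSqCDF x}

/-- `H(s) = -Q(1-s)` for `0 ≤ s < 1`. -/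
noncomputable def Hfun (s : ℝ) : ℝ :=
  -chiSqQuantile (1 - s)

open scoped RealInnerProductSpace

lemma charFun_rot {n : ℕ} {μ : Measure (EuclideanSpace ℝ (Fin n))} (h : IsUniformOnSphere μ)
    {s t : EuclideanSpace ℝ (Fin n)} (hst : ‖s‖ = ‖t‖) : charFun μ s = charFun μ t := by
  obtain ⟨_, -, h3⟩ := h
  set O := (Submodule.reflection (ℝ ∙ (s - t))ᗮ) with hO
  have hOs : O s = t := Submodule.reflection_sub hst
  have key : charFun (Measure.map O μ) (O s) = charFun μ s := by
    rw [charFun_apply, charFun_apply, integral_map (by fun_prop) (by fun_prop)]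
    congr 1
    ext x
    have : inner ℝ (O x) (O s) = inner ℝ x s := O.inner_map_map x s
    rw [this]
  rw [← key, h3 O, hOs]

lemma charFun_avg {n : ℕ} {μ ν : Measure (EuclideanSpace ℝ (Fin n))} (h : IsUniformOnSphere μ)
    (h' : IsUniformOnSphere ν) (t : EuclideanSpace ℝ (Fin n)) :
    ∫ y, charFun μ (‖t‖ • y) ∂ν = charFun μ t := by
  have := h.1
  have := h'.1
  have hae : ∀ᵐ y ∂ν, charFun μ (‖t‖ • y) = charFun μ t := by
    have : ∀ᵐ y ∂ν, y ∈ Metric.sphere (0 : EuclideanSpace ℝ (Fin n)) 1 :=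
      (mem_ae_iff_prob_eq_one Metric.isClosed_sphere.measurableSet).2 h'.2.1
    filter_upwards [this] with y hy
    apply charFun_rot h
    simp at hy
    simp [norm_smul, hy]
  rw [integral_congr_ae hae]
  simp

lemma uniform_unique {n : ℕ} {μ ν : Measure (EuclideanSpace ℝ (Fin n))} (h : IsUniformOnSphere μ)
    (h' : IsUniformOnSphere ν) : μ = ν := by
  have := h.1
  have := h'.1
  apply Measure.ext_of_charFun
  ext t
  rw [← charFun_avg h h' t, ← charFun_avg h' h t]
  simp only [charFun_apply]
  rw [integral_integral_swap]
  · congr 1; ext x; congr 1; ext y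
    simp [inner_smul_right, real_inner_comm]
  · have : Continuous (Function.uncurry fun (x y : EuclideanSpace ℝ (Fin n)) =>
      Complex.exp ((inner ℝ y (‖t‖ • x) : ℝ) * Complex.I)) := by
      unfold Function.uncurry; fun_prop
    refine Integrable.of_bound this.aestronglyMeasurable 1 (ae_of_all _ fun p => ?_)
    simp [Function.uncurry, Complex.norm_exp]

/-- The probability space of sequences of iid standard Gaussians. -/
noncomputable def gP : Measure (ℕ → ℝ) := Measure.infinitePi (fun _ : ℕ => gaussianReal 0 1)

instance : IsProbabilityMeasure gP := by unfold gP; infer_instance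

/-- First `n` coordinates. -/
noncomputable def gvec (n : ℕ) (ω : ℕ → ℝ) : EuclideanSpace ℝ (Fin n) :=
  WithLp.toLp 2 (fun i : Fin n => ω i)

lemma measurable_gvec (n : ℕ) : Measurable (gvec n) := by
  unfold gvec
  fun_prop

lemma gvec_law (n : ℕ) : gP.map (gvec n) = stdGaussian (EuclideanSpace ℝ (Fin n)) := by
  rw [← map_pi_eq_stdGaussian]
  have : gvec n = (WithLp.toLp 2) ∘ (fun (ω : ℕ → ℝ) (i : Fin n) => ω i) := rfl
  rw [this, ← Measure.map_map (by fun_prop) (by fun_prop)]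
  congr 1
  have hi : iIndepFun (fun (i : ℕ) (ω : ℕ → ℝ) => ω i) gP :=
    iIndepFun_infinitePi (X := fun _ x => x) (by fun_prop)
  have hi2 : iIndepFun (fun (i : Fin n) (ω : ℕ → ℝ) => ω (i : ℕ)) gP :=
    hi.precomp Fin.val_injective
  rw [iIndepFun_iff_map_fun_eq_pi_map (ι := Fin n)
    (fun i : Fin n => (measurable_pi_apply (i : ℕ)).aemeasurable)] at hi2
  rw [hi2]
  congr 1
  ext1 i
  exact Measure.infinitePi_map_eval (fun _ : ℕ => gaussianReal 0 1) (i : ℕ)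

noncomputable def nrm {n : ℕ} (x : EuclideanSpace ℝ (Fin n)) : EuclideanSpace ℝ (Fin n) :=
  ‖x‖⁻¹ • x

lemma measurable_nrm (n : ℕ) : Measurable (nrm (n := n)) := by
  unfold nrm; fun_prop

lemma ae_ne_zero : ∀ᵐ ω ∂gP, ω 0 ≠ 0 := by
  have h : gP.map (fun ω => ω 0) = gaussianReal 0 1 :=
    Measure.infinitePi_map_eval (fun _ : ℕ => gaussianReal 0 1) 0
  have h2 : ∀ᵐ x ∂(gP.map (fun ω => ω 0)), x ≠ 0 := by
    rw [h]
    have := nullSingletonClass_gaussianReal (μ := 0) (v := 1) one_ne_zero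
    rw [ae_iff]
    simp
  exact ae_of_ae_map (f := fun ω : ℕ → ℝ => ω 0) (measurable_pi_apply 0).aemeasurable h2

lemma gauss_uniform {n : ℕ} (hn : 1 ≤ n) :
    IsUniformOnSphere (gP.map (fun ω => nrm (gvec n ω))) := by
  have hm : Measurable (fun ω => nrm (gvec n ω)) := (measurable_nrm n).comp (measurable_gvec n)
  refine ⟨Measure.isProbabilityMeasure_map hm.aemeasurable, ?_, fun O => ?_⟩
  · rw [Measure.map_apply hm Metric.isClosed_sphere.measurableSet]
    refine (mem_ae_iff_prob_eq_one (hm Metric.isClosed_sphere.measurableSet)).1 ?_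
    filter_upwards [ae_ne_zero] with ω hω
    have : gvec n ω ≠ 0 := by
      intro h
      apply hω
      have := congrArg (fun x => x ⟨0, hn⟩) h
      simpa [gvec] using this
    simp [nrm, norm_smul, this]
  · have hO : Measurable O := by fun_prop
    rw [Measure.map_map hO hm]
    have h1 : (O ∘ fun ω => nrm (gvec n ω)) = nrm ∘ (O ∘ gvec n) := by
      ext1 ω
      simp [nrm]
    have h2 : (fun ω => nrm (gvec n ω)) = nrm ∘ gvec n := rfl
    rw [h1, ← Measure.map_map (measurable_nrm n) (hO.comp (measurable_gvec n)),
      ← Measure.map_map hO (measurable_gvec n), gvec_law, stdGaussian_map, h2,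
      ← Measure.map_map (measurable_nrm n) (measurable_gvec n), gvec_law]

lemma lln (φ : ℝ → ℝ) (hφ : Measurable φ) (hi : Integrable φ (gaussianReal 0 1)) :
    ∀ᵐ ω ∂gP, Tendsto (fun n : ℕ => (∑ i ∈ Finset.range n, φ (ω i)) / n) atTop
      (nhds (∫ x, φ x ∂(gaussianReal 0 1))) := by
  have hmap : ∀ i, gP.map (fun ω => ω i) = gaussianReal 0 1 := fun i =>
    Measure.infinitePi_map_eval (fun _ : ℕ => gaussianReal 0 1) i
  have key := strong_law_ae_real (μ := gP) (fun i ω => φ (ω i)) ?_ ?_ ?_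
  · have : ∫ ω, φ (ω 0) ∂gP = ∫ x, φ x ∂(gaussianReal 0 1) := by
      rw [← hmap 0, integral_map (measurable_pi_apply 0).aemeasurable (hφ.aestronglyMeasurable)]
    rw [← this]
    exact key
  · rw [← hmap 0] at hi
    exact hi.comp_measurable (by fun_prop)
  · intro i j hij
    exact (iIndepFun_infinitePi (X := fun _ x => φ x) (P := fun _ : ℕ => gaussianReal 0 1)
      (fun _ => hφ)).indepFun hij
  · intro i
    have : IdentDistrib (fun ω : ℕ → ℝ => ω i) (fun ω => ω 0) gP gP :=
      ⟨(measurable_pi_apply i).aemeasurable, (measurable_pi_apply 0).aemeasurable, by rw [hmap, hmap]⟩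
    exact this.comp hφ
/-- Law of the square of a standard Gaussian. -/
noncomputable def rho : Measure ℝ := (gaussianReal 0 1).map (fun y => y ^ 2)

instance : IsProbabilityMeasure rho :=
  Measure.isProbabilityMeasure_map (by fun_prop)

lemma F_eq_cdf (x : ℝ) : chiSqCDF x = cdf rho x := by
  rw [cdf_eq_real, Measure.real, rho, Measure.map_apply (by fun_prop) measurableSet_Iic]
  rfl

lemma F_mono : Monotone chiSqCDF := by
  intro a b h
  rw [F_eq_cdf, F_eq_cdf]
  exact monotone_cdf rho h

lemma F_nonneg (x : ℝ) : 0 ≤ chiSqCDF x := by rw [F_eq_cdf]; exact cdf_nonneg _ _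
lemma F_le_one (x : ℝ) : chiSqCDF x ≤ 1 := by rw [F_eq_cdf]; exact cdf_le_one _ _

lemma F_neg {x : ℝ} (hx : x < 0) : chiSqCDF x = 0 := by
  have : {y : ℝ | y ^ 2 ≤ x} = ∅ := by
    ext y
    simp only [Set.mem_ofPred_eq, Set.mem_empty_iff_false, iff_false, not_le]
    nlinarith [sq_nonneg y]
  simp [chiSqCDF, this]

lemma rho_singleton (a : ℝ) : rho {a} = 0 := by
  rw [rho, Measure.map_apply (by fun_prop) (measurableSet_singleton a)]
  have := nullSingletonClass_gaussianReal (μ := 0) (v := 1) one_ne_zero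
  have hsub : (fun y : ℝ => y ^ 2) ⁻¹' {a} ⊆ {√a, -√a} := by
    intro y hy
    simp only [Set.mem_preimage, Set.mem_singleton_iff] at hy
    simp only [Set.mem_insert_iff, Set.mem_singleton_iff]
    rw [← hy, Real.sqrt_sq_eq_abs]
    rcases abs_cases y with h | h
    · left; exact h.1.symm
    · right; linarith [h.1]
  exact measure_mono_null hsub (Set.Finite.measure_zero (by simp) _)

lemma F_cont : Continuous chiSqCDF := by
  have h : chiSqCDF = cdf rho := funext F_eq_cdf
  rw [h, continuous_iff_continuousAt]
  intro a
  rw [(monotone_cdf rho).continuousAt_iff_leftLim_eq_rightLim, StieltjesFunction.rightLim_eq]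
  have h1 := StieltjesFunction.measure_singleton (cdf rho) a
  rw [measure_cdf, rho_singleton] at h1
  have h2 := ENNReal.ofReal_eq_zero.1 h1.symm
  exact le_antisymm ((monotone_cdf rho).leftLim_le le_rfl) (by linarith)

lemma F_surj {s : ℝ} (h0 : 0 < s) (h1 : s < 1) : ∃ t, 0 ≤ t ∧ chiSqCDF t = s := by
  have h : chiSqCDF = cdf rho := funext F_eq_cdf
  have ht : Tendsto chiSqCDF atTop (nhds 1) := by rw [h]; exact tendsto_cdf_atTop rho
  obtain ⟨b, hb⟩ := (ht.eventually (lt_mem_nhds h1)).exists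
  have hb0 : (-1 : ℝ) ≤ b := by
    by_contra hc
    rw [F_neg (by linarith)] at hb
    linarith
  obtain ⟨t, -, ht⟩ := intermediate_value_Icc hb0 F_cont.continuousOn
    (show s ∈ Set.Icc (chiSqCDF (-1)) (chiSqCDF b) from ⟨by rw [F_neg (by norm_num)]; exact h0.le, hb.le⟩)
  refine ⟨t, ?_, ht⟩
  by_contra hc
  rw [F_neg (by linarith)] at ht
  linarith

lemma Q_le_iff {s : ℝ} (h0 : 0 < s) (h1 : s < 1) (x : ℝ) :
    chiSqQuantile s ≤ x ↔ s ≤ chiSqCDF x := by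
  have hb : BddBelow {x : ℝ | s ≤ chiSqCDF x} := by
    refine ⟨0, fun x hx => ?_⟩
    by_contra hc
    simp only [Set.mem_ofPred_eq] at hx
    rw [F_neg (by linarith)] at hx
    linarith
  have hne : {x : ℝ | s ≤ chiSqCDF x}.Nonempty := by
    obtain ⟨t, _, ht⟩ := F_surj h0 h1
    exact ⟨t, ht.ge⟩
  have hc : IsClosed {x : ℝ | s ≤ chiSqCDF x} := isClosed_le continuous_const F_cont
  constructor
  · intro h
    have := hc.csInf_mem hne hb
    exact le_trans this (F_mono h)
  · intro h
    exact csInf_le hb h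

lemma Q_mono : MonotoneOn chiSqQuantile (Set.Ioo 0 1) := by
  intro a ha b hb hab
  rw [Q_le_iff ha.1 ha.2]
  exact hab.trans ((Q_le_iff hb.1 hb.2 _).1 le_rfl)

lemma Q_aem : AEMeasurable chiSqQuantile (volume.restrict (Set.Ioo (0:ℝ) 1)) :=
  aemeasurable_restrict_of_monotoneOn measurableSet_Ioo Q_mono

lemma map_Q : (volume.restrict (Set.Ioo (0:ℝ) 1)).map chiSqQuantile = rho := by
  have : IsProbabilityMeasure (volume.restrict (Set.Ioo (0:ℝ) 1)) := ⟨by simp⟩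
  have := Measure.isProbabilityMeasure_map Q_aem
  apply Measure.ext_of_Iic
  intro x
  rw [Measure.map_apply_of_aemeasurable Q_aem measurableSet_Iic,
    Measure.restrict_apply' measurableSet_Ioo, ← ofReal_cdf, ← F_eq_cdf]
  apply le_antisymm
  · calc _ ≤ volume (Set.Ioc 0 (chiSqCDF x)) := by
          apply measure_mono
          rintro s ⟨h1, h2⟩
          exact ⟨h2.1, (Q_le_iff h2.1 h2.2 x).1 h1⟩
      _ = _ := by simp
  · calc _ = volume (Set.Ioo 0 (chiSqCDF x)) := by simp
      _ ≤ _ := by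
          apply measure_mono
          rintro s ⟨h1, h2⟩
          have h3 := h2.trans_le (F_le_one x)
          exact ⟨(Q_le_iff h1 h3 x).2 h2.le, h1, h3⟩

lemma integral_Q (φ : ℝ → ℝ) (hφ : Measurable φ) :
    ∫ s in Set.Ioo (0:ℝ) 1, φ (chiSqQuantile s) = ∫ y, φ (y ^ 2) ∂(gaussianReal 0 1) := by
  rw [← integral_map Q_aem hφ.aestronglyMeasurable, map_Q, rho,
    integral_map (by fun_prop) hφ.aestronglyMeasurable]

lemma integrable_sq_gauss : Integrable (fun y : ℝ => y ^ 2) (gaussianReal 0 1) :=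
  (memLp_id_gaussianReal 2).integrable_sq

lemma integral_sq_gauss : ∫ y : ℝ, y ^ 2 ∂(gaussianReal 0 1) = 1 := by
  have h := variance_id_gaussianReal (μ := 0) (v := 1)
  rw [variance_of_integral_eq_zero (by fun_prop) (by simp [integral_id_gaussianReal])] at h
  simpa using h

lemma integrable_Q : IntegrableOn chiSqQuantile (Set.Ioo 0 1) := by
  have h : Integrable (fun y : ℝ => y) rho := by
    rw [rho, integrable_map_measure (by fun_prop) (by fun_prop)]
    exact integrable_sq_gauss
  rw [← map_Q, integrable_map_measure (by fun_prop) Q_aem] at h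
  exact h

lemma ii_Q : IntervalIntegrable chiSqQuantile volume 0 1 := by
  rw [intervalIntegrable_iff_integrableOn_Ioo_of_le zero_le_one]
  exact integrable_Q

lemma ii_H : IntervalIntegrable Hfun volume 0 1 := by
  have := (ii_Q.comp_sub_left 1).symm.neg
  simp only [sub_zero, sub_self] at this
  exact this

/-- Limit value. -/
noncomputable def Lval (δ : ℝ) : ℝ := -∫ u in (0 : ℝ)..δ, Hfun u

lemma Lval_eq_Q (δ : ℝ) : Lval δ = ∫ s in (1 - δ)..1, chiSqQuantile s := by
  simp only [Lval, Hfun, intervalIntegral.integral_neg, neg_neg]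
  rw [intervalIntegral.integral_comp_sub_left (fun s => chiSqQuantile s)]
  simp

lemma Lval_one : Lval 1 = 1 := by
  rw [Lval_eq_Q, sub_self, intervalIntegral.integral_of_le zero_le_one,
    integral_Ioc_eq_integral_Ioo, integral_Q (fun x => x) (by fun_prop), integral_sq_gauss]

lemma Lval_compl {δ : ℝ} (h0 : 0 < δ) (h1 : δ < 1) :
    1 - Lval (1 - δ) = -∫ u in (1 - δ)..1, Hfun u := by
  have hmem : 1 - δ ∈ Set.uIcc (0:ℝ) 1 := by
    rw [Set.uIcc_of_le zero_le_one]
    constructor <;> linarith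
  have := intervalIntegral.integral_add_adjacent_intervals (a := 0) (b := 1 - δ) (c := 1)
    (f := Hfun) (μ := volume)
    (ii_H.mono_set (Set.uIcc_subset_uIcc (by simp) hmem))
    (ii_H.mono_set (Set.uIcc_subset_uIcc hmem (by simp)))
  have h := Lval_one
  simp only [Lval] at *
  linarith

lemma Lval_eq {δ t : ℝ} (h0 : 0 < δ) (h1 : δ < 1) (ht : chiSqCDF t = 1 - δ) :
    Lval δ = ∫ y, (if t < y ^ 2 then y ^ 2 else 0) ∂(gaussianReal 0 1) := by
  rw [← integral_Q (fun x => if t < x then x else 0)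
    (Measurable.ite (measurableSet_lt measurable_const measurable_id) measurable_id measurable_const)]
  have : ∫ s in Set.Ioo (0:ℝ) 1, (if t < chiSqQuantile s then chiSqQuantile s else 0)
      = ∫ s in Set.Ioo (0:ℝ) 1, (Set.Ioo (1 - δ) 1).indicator chiSqQuantile s := by
    apply setIntegral_congr_fun measurableSet_Ioo
    intro s hs
    have : t < chiSqQuantile s ↔ 1 - δ < s := by
      rw [← not_le, Q_le_iff hs.1 hs.2, ht, not_le]
    simp only [this, Set.indicator, Set.mem_Ioo, hs.2, and_true]
  rw [this, setIntegral_indicator measurableSet_Ioo, Set.inter_eq_right.2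
    (Set.Ioo_subset_Ioo_left (by linarith)), Lval_eq_Q,
    intervalIntegral.integral_of_le (by linarith), integral_Ioc_eq_integral_Ioo]

lemma prob_gt {δ t : ℝ} (ht : chiSqCDF t = 1 - δ) :
    ∫ y, (if t < y ^ 2 then (1:ℝ) else 0) ∂(gaussianReal 0 1) = δ := by
  have hm : MeasurableSet {y : ℝ | y ^ 2 ≤ t} := measurableSet_le (by fun_prop) (by fun_prop)
  have : (fun y : ℝ => if t < y ^ 2 then (1:ℝ) else 0) = {y : ℝ | y ^ 2 ≤ t}ᶜ.indicator 1 := by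
    ext y
    simp [Set.indicator]
  rw [this, integral_indicator_one hm.compl, probReal_compl_eq_one_sub hm]
  change 1 - chiSqCDF t = δ
  linarith

lemma Lval_tendsto {δ : ℝ} (h0 : 0 < δ) (h1 : δ < 1) {a : ℕ → ℝ} (ha : ∀ m, a m ∈ Set.Icc 0 1)
    (hl : Tendsto a atTop (nhds δ)) : Tendsto (fun m => Lval (a m)) atTop (nhds (Lval δ)) := by
  have hc : ContinuousOn Lval (Set.Icc 0 1) := by
    have := intervalIntegral.continuousOn_primitive_interval
      (f := Hfun) (μ := volume) (a := 0) (b := 1)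
      (by rw [Set.uIcc_of_le zero_le_one]
          exact (intervalIntegrable_iff_integrableOn_Icc_of_le zero_le_one).1 ii_H)
    rw [Set.uIcc_of_le zero_le_one] at this
    exact this.neg
  have := hc δ ⟨h0.le, h1.le⟩
  exact this.tendsto.comp (tendsto_nhdsWithin_iff.2 ⟨hl, Eventually.of_forall ha⟩)
/-- The set of `k`-subset sums of squares. -/
def sset {n : ℕ} (k : ℕ) (x : EuclideanSpace ℝ (Fin n)) : Set ℝ :=
  {r : ℝ | ∃ S : Finset (Fin n), S.card = k ∧ r = ∑ i ∈ S, x i ^ 2}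

lemma sset_range {n : ℕ} (k : ℕ) (x : EuclideanSpace ℝ (Fin n)) :
    sset k x = Set.range (fun S : {S : Finset (Fin n) // S.card = k} => ∑ i ∈ S.1, x i ^ 2) := by
  ext r
  simp only [sset, Set.mem_ofPred_eq, Set.mem_range, Subtype.exists, exists_prop]
  constructor
  · rintro ⟨S, h, rfl⟩; exact ⟨S, h, rfl⟩
  · rintro ⟨S, h, rfl⟩; exact ⟨S, h, rfl⟩

lemma sset_finite {n : ℕ} (k : ℕ) (x : EuclideanSpace ℝ (Fin n)) : (sset k x).Finite := by
  rw [sset_range]; exact Set.finite_range _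

lemma sset_nonempty {n k : ℕ} (hk : k ≤ n) (x : EuclideanSpace ℝ (Fin n)) :
    (sset k x).Nonempty := by
  obtain ⟨S, -, hS⟩ := Finset.exists_subset_card_eq (s := (Finset.univ : Finset (Fin n))) (n := k)
    (by simpa using hk)
  exact ⟨_, S, hS, rfl⟩

lemma measurable_sup (n k : ℕ) :
    Measurable (fun x : EuclideanSpace ℝ (Fin n) => sSup (sset k x)) := by
  simp only [sset_range]
  exact Measurable.iSup (fun S => by fun_prop)

lemma measurable_inf (n k : ℕ) :
    Measurable (fun x : EuclideanSpace ℝ (Fin n) => sInf (sset k x)) := by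
  simp only [sset_range]
  exact Measurable.iInf (fun S => by fun_prop)

lemma inf_eq {n k : ℕ} (hk : k ≤ n) (x : EuclideanSpace ℝ (Fin n)) (hx : ∑ i, x i ^ 2 = 1) :
    sInf (sset k x) = 1 - sSup (sset (n - k) x) := by
  have hg : IsGreatest (sset (n - k) x) (sSup (sset (n - k) x)) :=
    ⟨(sset_nonempty (Nat.sub_le _ _) x).csSup_mem (sset_finite _ x),
      fun r hr => le_csSup (sset_finite _ x).bddAbove hr⟩
  apply IsLeast.csInf_eq
  constructor
  · obtain ⟨S, hS, h⟩ := hg.1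
    refine ⟨Sᶜ, ?_, ?_⟩
    · rw [Finset.card_compl, hS, Fintype.card_fin]; omega
    · rw [h, ← hx, ← Finset.sum_add_sum_compl S]; ring
  · rintro r ⟨S, hS, rfl⟩
    have : ∑ i ∈ Sᶜ, x i ^ 2 ∈ sset (n - k) x :=
      ⟨Sᶜ, by rw [Finset.card_compl, hS, Fintype.card_fin], rfl⟩
    have h1 := hg.2 this
    have h2 := Finset.sum_add_sum_compl S (fun i => x i ^ 2)
    linarith

lemma norm_gvec (n : ℕ) (ω : ℕ → ℝ) : ‖gvec n ω‖ ^ 2 = ∑ i ∈ Finset.range n, ω i ^ 2 := by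
  rw [EuclideanSpace.real_norm_sq_eq, Finset.sum_range]
  rfl

lemma nrm_sq (n : ℕ) (ω : ℕ → ℝ) (i : Fin n) :
    nrm (gvec n ω) i ^ 2 = (∑ i ∈ Finset.range n, ω i ^ 2)⁻¹ * ω i ^ 2 := by
  rw [← norm_gvec]
  simp [nrm, gvec, mul_pow]

lemma sset_sup_le {n k : ℕ} (hk : k ≤ n) (ω : ℕ → ℝ) (t : ℝ) :
    sSup (sset k (nrm (gvec n ω))) ≤ (∑ i ∈ Finset.range n, ω i ^ 2)⁻¹ *
      (k * t + ∑ i ∈ Finset.range n, (if t < ω i ^ 2 then ω i ^ 2 - t else 0)) := by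
  apply csSup_le (sset_nonempty hk _)
  rintro r ⟨S, hS, rfl⟩
  simp only [nrm_sq]
  rw [← Finset.mul_sum]
  apply mul_le_mul_of_nonneg_left
  · rw [Finset.sum_range]
    calc ∑ i ∈ S, ω i ^ 2 ≤ ∑ i ∈ S, (t + (if t < ω i ^ 2 then ω i ^ 2 - t else 0)) := by
          apply Finset.sum_le_sum
          intro i _
          split_ifs <;> linarith
      _ = k * t + ∑ i ∈ S, (if t < ω i ^ 2 then ω i ^ 2 - t else 0) := by
          rw [Finset.sum_add_distrib]; simp [hS]
      _ ≤ _ := by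
          gcongr
          · intro i _ _
            split_ifs <;> linarith
          · exact Finset.subset_univ S
  · exact inv_nonneg.2 (Finset.sum_nonneg fun i _ => sq_nonneg _)

lemma sset_le_sup {n k : ℕ} (hk : k ≤ n) (ω : ℕ → ℝ) (t : ℝ)
    (h : ∑ i ∈ Finset.range n, (if t < ω i ^ 2 then (1:ℝ) else 0) ≤ k) :
    (∑ i ∈ Finset.range n, ω i ^ 2)⁻¹ *
      (∑ i ∈ Finset.range n, (if t < ω i ^ 2 then ω i ^ 2 else 0)) ≤
    sSup (sset k (nrm (gvec n ω))) := by
  classical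
  set T : Finset (Fin n) := Finset.univ.filter (fun i : Fin n => t < ω i ^ 2) with hT
  have hTc : T.card ≤ k := by
    rw [Finset.sum_range, Finset.sum_boole] at h
    exact_mod_cast h
  obtain ⟨S, hTS, hS⟩ := Finset.exists_superset_card_eq hTc (by simpa using hk)
  have hmem : ∑ i ∈ S, nrm (gvec n ω) i ^ 2 ∈ sset k (nrm (gvec n ω)) := ⟨S, hS, rfl⟩
  refine le_trans ?_ (le_csSup (sset_finite _ _).bddAbove hmem)
  simp only [nrm_sq]
  rw [← Finset.mul_sum]
  apply mul_le_mul_of_nonneg_left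
  · rw [Finset.sum_range, ← Finset.sum_filter]
    exact Finset.sum_le_sum_of_subset_of_nonneg hTS (fun i _ _ => sq_nonneg _)
  · exact inv_nonneg.2 (Finset.sum_nonneg fun i _ => sq_nonneg _)

lemma integrable_ite {f : ℝ → ℝ} (t : ℝ) (hf : Integrable f (gaussianReal 0 1)) :
    Integrable (fun y : ℝ => if t < y ^ 2 then f y else 0) (gaussianReal 0 1) := by
  have hm : MeasurableSet {y : ℝ | t < y ^ 2} := measurableSet_lt (by fun_prop) (by fun_prop)
  have := hf.indicator hm
  refine this.congr (ae_of_all _ fun y => ?_)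
  simp [Set.indicator]

lemma measurable_ite' {f : ℝ → ℝ} (t : ℝ) (hf : Measurable f) :
    Measurable (fun y : ℝ => if t < y ^ 2 then f y else 0) :=
  Measurable.ite (measurableSet_lt (by fun_prop) (by fun_prop)) hf measurable_const

lemma main_as {δ : ℝ} (h0 : 0 < δ) (h1 : δ < 1) (k : ℕ → ℕ) (hk : ∀ n, k n ≤ n)
    (hkl : Tendsto (fun n : ℕ => (k n : ℝ) / n) atTop (nhds δ)) :
    ∀ᵐ ω ∂gP, Tendsto (fun n : ℕ => sSup (sset (k n) (nrm (gvec n ω)))) atTop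
      (nhds (Lval δ)) := by
  obtain ⟨t, -, ht⟩ := F_surj (s := 1 - δ) (by linarith) (by linarith)
  set d : ℕ → ℝ := fun m => δ - δ / 2 * (1 / ((m : ℝ) + 1)) with hd
  have hdb : ∀ m, 0 < d m ∧ d m < δ := by
    intro m
    have e1 : 0 < 1 / ((m : ℝ) + 1) := by positivity
    have e2 : 1 / ((m : ℝ) + 1) ≤ 1 := by
      rw [div_le_one (by positivity)]; linarith [Nat.cast_nonneg (α := ℝ) m]
    constructor
    · simp only [hd]; nlinarith
    · simp only [hd]; nlinarith
  have hdl : Tendsto d atTop (nhds δ) := by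
    have := (tendsto_one_div_add_atTop_nhds_zero_nat (𝕜 := ℝ)).const_mul (δ / 2)
    simpa [hd] using this.const_sub δ
  have hex : ∀ m, ∃ s, chiSqCDF s = 1 - d m := fun m => by
    obtain ⟨s, -, hs⟩ := F_surj (s := 1 - d m) (by linarith [(hdb m).2]) (by linarith [(hdb m).1])
    exact ⟨s, hs⟩
  choose s hs using hex
  have hLl := Lval_tendsto h0 h1 (a := d)
    (fun m => ⟨(hdb m).1.le, by linarith [(hdb m).2]⟩) hdl
  have A1 := lln (fun y => y ^ 2) (by fun_prop) integrable_sq_gauss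
  have A2 := lln _ (measurable_ite' t (f := fun y => y ^ 2 - t) (by fun_prop))
    (integrable_ite t (integrable_sq_gauss.sub (integrable_const t)))
  have A3 := ae_all_iff.2 fun m => lln _ (measurable_ite' (s m) (f := fun y => y ^ 2) (by fun_prop))
    (integrable_ite (s m) integrable_sq_gauss)
  have A4 := ae_all_iff.2 fun m => lln _ (measurable_ite' (s m) (f := fun y => 1) (by fun_prop))
    (integrable_ite (s m) (integrable_const 1))
  have hE : ∫ y, (if t < y ^ 2 then y ^ 2 - t else 0) ∂(gaussianReal 0 1) = Lval δ - δ * t := by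
    have e : (fun y : ℝ => if t < y ^ 2 then y ^ 2 - t else 0) =
        fun y => (if t < y ^ 2 then y ^ 2 else 0) - (if t < y ^ 2 then 1 else 0) * t := by
      ext y; split_ifs <;> simp
    rw [e, integral_sub (integrable_ite t integrable_sq_gauss)
      ((integrable_ite t (integrable_const 1)).mul_const t), integral_mul_const, prob_gt ht,
      ← Lval_eq h0 h1 ht]
  filter_upwards [A1, A2, A3, A4] with ω B1 B2 B3 B4
  rw [integral_sq_gauss] at B1
  rw [hE] at B2
  rw [tendsto_order]
  constructor
  · intro a ha
    obtain ⟨m, hm⟩ := (hLl.eventually (lt_mem_nhds ha)).exists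
    have C3 := B3 m
    have C4 := B4 m
    rw [prob_gt (hs m)] at C4
    rw [← Lval_eq (hdb m).1 (by linarith [(hdb m).2]) (hs m)] at C3
    have hlim := (B1.inv₀ one_ne_zero).mul C3
    rw [inv_one, one_mul] at hlim
    filter_upwards [hlim.eventually (lt_mem_nhds hm), C4.eventually_lt hkl (hdb m).2,
      eventually_gt_atTop 0] with n hn1 hn2 hn3
    have hn : (0:ℝ) < n := by exact_mod_cast hn3
    have := sset_le_sup (hk n) ω (s m) ((div_lt_div_iff_of_pos_right hn).1 hn2).le
    refine hn1.trans_le (le_trans (le_of_eq ?_) this)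
    field_simp
  · intro b hb
    have hlim := (B1.inv₀ one_ne_zero).mul ((hkl.mul_const t).add B2)
    rw [inv_one, one_mul, add_sub_cancel] at hlim
    filter_upwards [hlim.eventually (gt_mem_nhds hb), eventually_gt_atTop 0] with n hn1 hn3
    have hn : (0:ℝ) < n := by exact_mod_cast hn3
    have := sset_sup_le (hk n) ω t
    refine lt_of_le_of_lt (le_trans this (le_of_eq ?_)) hn1
    field_simp

lemma inf_as {δ : ℝ} (h0 : 0 < δ) (h1 : δ < 1) (k : ℕ → ℕ) (hk : ∀ n, k n ≤ n)
    (hkl : Tendsto (fun n : ℕ => (k n : ℝ) / n) atTop (nhds δ)) :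
    ∀ᵐ ω ∂gP, Tendsto (fun n : ℕ => sInf (sset (k n) (nrm (gvec n ω)))) atTop
      (nhds (1 - Lval (1 - δ))) := by
  have hkl' : Tendsto (fun n : ℕ => ((n - k n : ℕ) : ℝ) / n) atTop (nhds (1 - δ)) := by
    refine (hkl.const_sub 1).congr' ?_
    filter_upwards [eventually_gt_atTop 0] with n hn
    have hn : (0:ℝ) < n := by exact_mod_cast hn
    rw [Nat.cast_sub (hk n)]
    field_simp
  have := main_as (δ := 1 - δ) (by linarith) (by linarith) (fun n => n - k n)
    (fun n => Nat.sub_le _ _) hkl'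
  filter_upwards [this, ae_ne_zero] with ω hω hω0
  refine (hω.const_sub 1).congr' ?_
  filter_upwards [eventually_gt_atTop 0] with n hn
  rw [inf_eq (hk n)]
  simp only [nrm_sq]
  rw [← Finset.mul_sum, ← Finset.sum_range (fun i => ω i ^ 2)]
  apply inv_mul_cancel₀
  apply ne_of_gt
  exact Finset.sum_pos' (fun i _ => sq_nonneg _) ⟨0, by simpa using hn, by positivity⟩

lemma conv_prob (μ : ∀ n : ℕ, Measure (EuclideanSpace ℝ (Fin n)))
    (hμ : ∀ n, 1 ≤ n → IsUniformOnSphere (μ n)) (f : ∀ n, EuclideanSpace ℝ (Fin n) → ℝ)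
    (hf : ∀ n, Measurable (f n)) (c : ℝ)
    (h : ∀ᵐ ω ∂gP, Tendsto (fun n : ℕ => f n (nrm (gvec n ω))) atTop (nhds c)) (ε : ℝ)
    (hε : 0 < ε) : Tendsto (fun n : ℕ => μ n {x | ε < |f n x - c|}) atTop (nhds 0) := by
  have hm : ∀ n, Measurable (fun ω => nrm (gvec n ω)) := fun n =>
    (measurable_nrm n).comp (measurable_gvec n)
  have key := tendstoInMeasure_of_tendsto_ae (μ := gP)
    (fun n => ((hf n).comp (hm n)).aestronglyMeasurable) h
  rw [tendstoInMeasure_iff_norm] at key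
  refine tendsto_of_tendsto_of_tendsto_of_le_of_le' tendsto_const_nhds (key ε hε)
    (Eventually.of_forall fun _ => zero_le) ?_
  filter_upwards [eventually_ge_atTop 1] with n hn
  rw [uniform_unique (hμ n hn) (gauss_uniform hn), Measure.map_apply (hm n)
    (measurableSet_lt measurable_const (((hf n).sub_const c).abs))]
  apply measure_mono
  intro ω hω
  have hω' : ε < |f n (nrm (gvec n ω)) - c| := hω
  exact hω'.le

lemma floor_lim {δ : ℝ} (h0 : 0 < δ) :
    Tendsto (fun n : ℕ => (⌊δ * n⌋₊ : ℝ) / n) atTop (nhds δ) :=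
  (tendsto_nat_floor_mul_div_atTop h0.le).comp tendsto_natCast_atTop_atTop

lemma floor_le' {δ : ℝ} (h1 : δ < 1) (n : ℕ) : ⌊δ * n⌋₊ ≤ n := by
  apply Nat.floor_le_of_le
  nlinarith [Nat.cast_nonneg (α := ℝ) n]

/-- extreme order statistics.  Let `v_n` be uniform on `S^{n-1}`.  For any
fixed `0 < δ < 1`, the maximum of `‖v_n‖_S²` over subsets `S` of size `⌊δ n⌋` converges in
probability to `-∫_0^δ H(u) du`, and the minimum converges in probability to
`-∫_{1-δ}^1 H(u) du`. -/
theorem stmt6 (δ : ℝ) (hδ0 : 0 < δ) (hδ1 : δ < 1)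
    (μ : ∀ n : ℕ, Measure (EuclideanSpace ℝ (Fin n)))
    (hμ : ∀ n, 1 ≤ n → IsUniformOnSphere (μ n)) :
    (∀ ε : ℝ, 0 < ε →
      Tendsto
        (fun n : ℕ => μ n {x | ε <
            |sSup {r : ℝ | ∃ S : Finset (Fin n), S.card = ⌊δ * n⌋₊ ∧
                r = ∑ i ∈ S, x i ^ 2} -
              (-∫ u in (0 : ℝ)..δ, Hfun u)|})
        atTop (nhds 0)) ∧
    (∀ ε : ℝ, 0 < ε →
      Tendsto
        (fun n : ℕ => μ n {x | ε <
            |sInf {r : ℝ | ∃ S : Finset (Fin n), S.card = ⌊δ * n⌋₊ ∧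
                r = ∑ i ∈ S, x i ^ 2} -
              (-∫ u in (1 - δ : ℝ)..1, Hfun u)|})
        atTop (nhds 0)) := by
  refine ⟨fun ε hε => ?_, fun ε hε => ?_⟩
  · exact conv_prob μ hμ (fun n x => sSup (sset ⌊δ * n⌋₊ x)) (fun n => measurable_sup n _) _
      (main_as hδ0 hδ1 _ (floor_le' hδ1) (floor_lim hδ0)) ε hε
  · rw [← Lval_compl hδ0 hδ1]
    exact conv_prob μ hμ (fun n x => sInf (sset ⌊δ * n⌋₊ x)) (fun n => measurable_inf n _) _
      (inf_as hδ0 hδ1 _ (floor_le' hδ1) (floor_lim hδ0)) ε hε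
end
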